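/- arXiv:2311.15178 — 2 statements merged into one kernel-verified Lean document; each statement's English description precedes it below -/
import Mathlib

section
/- For every positive integer ℓ, s(4, 6ℓ, 2) = 4ℓ and s(4, 6ℓ − 1, 2) = 4ℓ. -/
open scoped Classical

/-- A placement delivery array with parameters `(F, K, Z)` over alphabet `S`:
an `F × K` array of cells that are either empty (`none`) or an element of `S`,
such that each column has exactly `Z` empty cells, no element occurs twice in a
row or in a column, and two equal entries in positions `(j₁,k₁)`, `(j₂,k₂)`
force the cells `(j₁,k₂)` and `(j₂,k₁)` to be empty. -/
def IsPDA {S : Type} (F K Z : ℕ) (A : Fin F → Fin K → Option S) : Prop :=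
  (∀ k : Fin K, (Finset.univ.filter fun j : Fin F => A j k = none).card = Z) ∧
  (∀ (j : Fin F) (k₁ k₂ : Fin K) (t : S), A j k₁ = some t → A j k₂ = some t → k₁ = k₂) ∧
  (∀ (j₁ j₂ : Fin F) (k : Fin K) (t : S), A j₁ k = some t → A j₂ k = some t → j₁ = j₂) ∧
  (∀ (j₁ j₂ : Fin F) (k₁ k₂ : Fin K) (t : S), j₁ ≠ j₂ → k₁ ≠ k₂ →
      A j₁ k₁ = some t → A j₂ k₂ = some t → A j₁ k₂ = none ∧ A j₂ k₁ = none)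

/-- `sPDA F K Z` is the minimum size of an alphabet `S` for which an `S`-PDA with
parameters `(F, K, Z)` exists. -/
noncomputable def sPDA (F K Z : ℕ) : ℕ :=
  sInf {n : ℕ | ∃ A : Fin F → Fin K → Option (Fin n), IsPDA F K Z A}

/-!
In a PDA the occurrences of a symbol lie in distinct rows, and all but one of them lie in a row that
is empty in the column of the remaining one, so a symbol fills at most `Z + 1` cells. Counting
nonempty cells then gives `K (F - Z) ≤ (Z + 1) |S|`.

The bound is attained by the array whose columns are the `(r + 1)`-subsets `T` of the rows and whose
cell `(j, T)` is `T \ {j}` if `j ∈ T` and empty otherwise. Disjoint copies of it multiply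
`K` and `|S|` alike, and deleting `d` columns with `d (r + 1) ≤ Z` does not change the rounded-up
bound. For four rows and `r = 1` a copy has six columns and four symbols.
-/

namespace IsPDA

variable {S : Type} {F K Z : ℕ} {A : Fin F → Fin K → Option S}

theorem card_nonempty_cells (hA : IsPDA F K Z A) :
    (Finset.univ.filter fun p : Fin F × Fin K => A p.1 p.2 ≠ none).card = K * (F - Z) := by
  have card_column (k : Fin K) :
      (Finset.univ.filter fun j : Fin F => A j k ≠ none).card = F - Z := by
    rw [← Finset.compl_filter, Finset.card_compl, hA.1 k, Fintype.card_fin]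
  simp only [Finset.card_filter] at card_column ⊢
  simp only [Fintype.sum_prod_type_right, card_column, Finset.sum_const, Finset.card_univ,
    Fintype.card_fin, smul_eq_mul]

theorem card_occurrences_le (hA : IsPDA F K Z A) (t : S) :
    (Finset.univ.filter fun p : Fin F × Fin K => A p.1 p.2 = some t).card ≤ Z + 1 := by
  obtain ⟨card_empty, row_unique, col_unique, cross⟩ := hA
  obtain ht | ⟨⟨j₀, k₀⟩, h₀⟩ :=
    (Finset.univ.filter fun p : Fin F × Fin K => A p.1 p.2 = some t).eq_empty_or_nonempty
  · simp [ht]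
  replace h₀ : A j₀ k₀ = some t := (Finset.mem_filter.1 h₀).2
  calc
    _ ≤ (insert j₀ (Finset.univ.filter fun j : Fin F => A j k₀ = none)).card := by
      refine Finset.card_le_card_of_injOn Prod.fst ?_ ?_
      · rintro ⟨j, k⟩ hjk
        replace hjk : A j k = some t := (Finset.mem_filter.1 hjk).2
        by_cases hj : j = j₀
        · simp [hj]
        have hk : k ≠ k₀ := fun hk => hj (col_unique j j₀ k₀ t (hk ▸ hjk) h₀)
        simp [(cross j j₀ k k₀ t hj hk hjk h₀).1]
      · rintro ⟨j, k⟩ hjk ⟨_, k'⟩ hjk' rfl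
        exact congrArg (j, ·) (row_unique j k k' t (Finset.mem_filter.1 hjk).2
          (Finset.mem_filter.1 hjk').2)
    _ ≤ Z + 1 := (Finset.card_insert_le _ _).trans_eq (by rw [card_empty])

theorem mul_sub_le_mul_card [Fintype S] (hA : IsPDA F K Z A) :
    K * (F - Z) ≤ (Z + 1) * Fintype.card S := by
  have cells_eq : (Finset.univ.filter fun p : Fin F × Fin K => A p.1 p.2 ≠ none) =
      Finset.univ.biUnion fun t => Finset.univ.filter fun p => A p.1 p.2 = some t := by
    ext p
    simp [Option.ne_none_iff_exists']
  rw [← hA.card_nonempty_cells, cells_eq, mul_comm]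
  exact Finset.card_biUnion_le_card_mul _ _ _ fun t _ => hA.card_occurrences_le t

theorem sPDA_eq_of_eq_ceilDiv {n : ℕ} {A : Fin F → Fin K → Option (Fin n)}
    (hA : IsPDA F K Z A) (hn : n = K * (F - Z) ⌈/⌉ (Z + 1)) : sPDA F K Z = n := by
  refine le_antisymm (Nat.sInf_le ⟨A, hA⟩) (le_csInf ⟨n, A, hA⟩ ?_)
  rintro m ⟨B, hB⟩
  rw [hn, ceilDiv_le_iff_le_mul Z.succ_pos]
  simpa using hB.mul_sub_le_mul_card

theorem relabel {T : Type} {φ : S → T} (hφ : Function.Injective φ) (hA : IsPDA F K Z A) :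
    IsPDA F K Z fun j k => (A j k).map φ := by
  obtain ⟨card_empty, row_unique, col_unique, cross⟩ := hA
  simp only [IsPDA, Option.map_eq_none_iff, Option.map_eq_some_iff]
  refine ⟨card_empty, ?_, ?_, ?_⟩
  · rintro j k₁ k₂ _ ⟨s, h₁, rfl⟩ ⟨s', h₂, hs⟩
    exact row_unique j k₁ k₂ s h₁ (hφ hs ▸ h₂)
  · rintro j₁ j₂ k _ ⟨s, h₁, rfl⟩ ⟨s', h₂, hs⟩
    exact col_unique j₁ j₂ k s h₁ (hφ hs ▸ h₂)
  · rintro j₁ j₂ k₁ k₂ _ hj hk ⟨s, h₁, rfl⟩ ⟨s', h₂, hs⟩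
    exact cross j₁ j₂ k₁ k₂ s hj hk h₁ (hφ hs ▸ h₂)

theorem exists_fin [Fintype S] {n : ℕ} (hA : IsPDA F K Z A) (hn : Fintype.card S = n) :
    ∃ B : Fin F → Fin K → Option (Fin n), IsPDA F K Z B :=
  ⟨_, hA.relabel (Fintype.equivFinOfCardEq hn).injective⟩

end IsPDA

/-- The array consisting of disjoint copies, indexed by `ι`, of the array with columns the
`(r + 1)`-subsets `T` of the rows, restricted to the columns selected by `c`. Its cell in row `j`
and column `T` of the `i`-th copy holds `T \ {j}`, tagged with `i`, if `j ∈ T`, and is empty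
otherwise. -/
def eraseArray {ι : Type} {F K r : ℕ} (c : Fin K → ι × Set.powersetCard (Fin F) (r + 1)) :
    Fin F → Fin K → Option (ι × Set.powersetCard (Fin F) r) := fun j k =>
  if hj : j ∈ (c k).2.1 then
    some ((c k).1, ⟨(c k).2.1.erase j, by simp [hj]⟩)
  else none

section EraseArray

variable {ι : Type} {F K r : ℕ} {c : Fin K → ι × Set.powersetCard (Fin F) (r + 1)}
  {j : Fin F} {k : Fin K}

theorem eraseArray_eq_none_iff : eraseArray c j k = none ↔ j ∉ (c k).2.1 := by
  simp [eraseArray]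

theorem eraseArray_eq_some_iff {t : ι × Set.powersetCard (Fin F) r} :
    eraseArray c j k = some t ↔
      j ∉ t.2.1 ∧ (c k).1 = t.1 ∧ (c k).2.1 = insert j t.2.1 := by
  have erase_eq_iff : j ∈ (c k).2.1 ∧ (c k).2.1.erase j = t.2.1 ↔
      j ∉ t.2.1 ∧ (c k).2.1 = insert j t.2.1 := by
    constructor
    · rintro ⟨hj, h⟩
      simp [← h, Finset.insert_erase hj]
    · rintro ⟨hj, h⟩
      simp [h, Finset.erase_insert hj]
  rw [and_left_comm, ← erase_eq_iff]
  simp only [eraseArray, Option.dite_none_right_eq_some, Option.some.injEq, Prod.ext_iff,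
    Subtype.ext_iff]
  tauto

theorem isPDA_eraseArray (hc : Function.Injective c) :
    IsPDA F K (F - (r + 1)) (eraseArray c) := by
  simp only [IsPDA, eraseArray_eq_none_iff, eraseArray_eq_some_iff]
  refine ⟨fun k => ?_, ?_, ?_, ?_⟩
  · rw [← Finset.compl_filter, Finset.card_compl, Fintype.card_fin, Finset.filter_univ_mem,
      Set.powersetCard.card_eq]
  · rintro j k₁ k₂ t ⟨-, hi₁, hT₁⟩ ⟨-, hi₂, hT₂⟩
    exact hc (Prod.ext (hi₁.trans hi₂.symm) (Subtype.ext (hT₁.trans hT₂.symm)))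
  · rintro j₁ j₂ k t ⟨hj₁, -, hT₁⟩ ⟨-, -, hT₂⟩
    exact (Finset.insert_inj hj₁).1 (hT₁.symm.trans hT₂)
  · rintro j₁ j₂ k₁ k₂ t hj - ⟨hj₁, -, hT₁⟩ ⟨hj₂, -, hT₂⟩
    simp [hT₁, hT₂, hj, hj.symm, hj₁, hj₂]

end EraseArray

theorem exists_isPDA_of_le_choose_mul {F K r ℓ : ℕ} (hK : K ≤ F.choose (r + 1) * ℓ) :
    ∃ A : Fin F → Fin K → Option (Fin (F.choose r * ℓ)), IsPDA F K (F - (r + 1)) A := by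
  have card_eq (m : ℕ) :
      Fintype.card (Fin ℓ × Set.powersetCard (Fin F) m) = F.choose m * ℓ := by
    rw [← Nat.card_eq_fintype_card, Nat.card_prod, Set.powersetCard.card, Nat.card_fin,
      Nat.card_fin, mul_comm]
  obtain ⟨c⟩ : Nonempty (Fin K ↪ Fin ℓ × Set.powersetCard (Fin F) (r + 1)) := by
    rwa [Function.Embedding.nonempty_iff_card_le, Fintype.card_fin, card_eq]
  exact (isPDA_eraseArray c.injective).exists_fin (card_eq r)

theorem stmt_11_general {Z r ℓ d K : ℕ} (hK : K + d = (Z + r + 1).choose (r + 1) * ℓ)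
    (hd : d * (r + 1) ≤ Z) : sPDA (Z + r + 1) K Z = (Z + r + 1).choose r * ℓ := by
  obtain ⟨A, hA⟩ := exists_isPDA_of_le_choose_mul (Nat.le_of_add_right_le hK.le)
  rw [show Z + r + 1 - (r + 1) = Z by lia] at hA
  refine hA.sPDA_eq_of_eq_ceilDiv ?_
  have cells_add : K * (r + 1) + d * (r + 1) = (Z + r + 1).choose r * ℓ * (Z + 1) := by
    calc
      _ = (Z + r + 1).choose (r + 1) * (r + 1) * ℓ := by rw [← add_mul, hK, mul_right_comm]
      _ = (Z + r + 1).choose r * (Z + r + 1 - r) * ℓ := by rw [Nat.choose_succ_right_eq]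
      _ = _ := by rw [show Z + r + 1 - r = Z + 1 by lia, mul_right_comm]
  rw [show Z + r + 1 - Z = r + 1 by lia, Nat.ceilDiv_eq_add_pred_div, eq_comm,
    Nat.div_eq_iff Z.succ_pos]
  lia

theorem stmt_11 (ℓ : ℕ) (hℓ : 1 ≤ ℓ) :
    sPDA 4 (6 * ℓ) 2 = 4 * ℓ ∧ sPDA 4 (6 * ℓ - 1) 2 = 4 * ℓ := by
  exact ⟨stmt_11_general (r := 1) (d := 0) rfl (by lia),
    stmt_11_general (r := 1) (d := 1) (Nat.sub_add_cancel (by lia : 1 ≤ 6 * ℓ)) le_rfl⟩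
end

section
/- For every positive integer K, s(5, K, 3) = ⌈K/2⌉ if K ≡ 0 or 9 (mod 10), and s(5, K, 3) = ⌈K/2⌉ + 1 otherwise. -/
open scoped Classical

/-!
In an `(F, K, Z)` array over `n` symbols, an occurrence of a symbol `t` in column `k` forces column
`k` to be empty in every other row containing `t`, so `t` occurs at most `Z + 1` times. Counting
nonempty cells by columns and by symbols gives `K (F - Z) ≤ n (Z + 1)`, that is `K ≤ 2 n` for
`(F, Z) = (5, 3)`.

If the defect `n (Z + 1) - K (F - Z)` is small, then some row `a` is missed only by symbols
occurring exactly `Z + 1` times. Count the nonempty cells in the columns meeting row `a`: a symbol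
in row `a` contributes only its cell in that row, and a symbol missing row `a` contributes all of
its `Z + 1` cells. If `m` symbols lie in row `a`, then `m (F - Z) = m + (n - m) (Z + 1)`, that is
`m F = n (Z + 1)`. For `(F, Z) = (5, 3)` and `n = ⌈K / 2⌉` this shows `5 ∣ n`, hence
`K ≡ 0` or `9` modulo `10`.

Conversely, copies of the `10`-column array on `5` symbols given by the edges of the complete graph
`K₅`, followed by one smaller array, attain the bounds.
-/

open Finset

section Basic

variable {S T : Type} {F K K' Z : ℕ} {A : Fin F → Fin K → Option S}

theorem isPDA_iff :
    IsPDA F K Z A ↔ (∀ k, #{j | A j k = none} = Z) ∧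
      ∀ j₁ j₂ k₁ k₂ t, A j₁ k₁ = some t → A j₂ k₂ = some t →
        (j₁ = j₂ ∧ k₁ = k₂) ∨ (A j₁ k₂ = none ∧ A j₂ k₁ = none) := by
  refine and_congr_right fun _ ↦ ⟨?_, fun h ↦ ⟨?_, ?_, ?_⟩⟩
  · rintro ⟨hrow, hcol, hcross⟩ j₁ j₂ k₁ k₂ t h₁ h₂
    by_cases hj : j₁ = j₂
    · subst hj
      exact .inl ⟨rfl, hrow _ _ _ _ h₁ h₂⟩
    by_cases hk : k₁ = k₂
    · subst hk
      exact .inl ⟨hcol _ _ _ _ h₁ h₂, rfl⟩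
    exact .inr (hcross _ _ _ _ _ hj hk h₁ h₂)
  · intro j k₁ k₂ t h₁ h₂
    exact (h _ _ _ _ _ h₁ h₂).elim And.right fun h ↦ by simp [h₂] at h
  · intro j₁ j₂ k t h₁ h₂
    exact (h _ _ _ _ _ h₁ h₂).elim And.left fun h ↦ by simp [h₁] at h
  · intro j₁ j₂ k₁ k₂ t hj _ h₁ h₂
    exact (h _ _ _ _ _ h₁ h₂).resolve_left fun h ↦ hj h.1

theorem IsPDA.eq_or_corners_eq_none (hA : IsPDA F K Z A) {j₁ j₂ : Fin F} {k₁ k₂ : Fin K} {t : S}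
    (h₁ : A j₁ k₁ = some t) (h₂ : A j₂ k₂ = some t) :
    (j₁ = j₂ ∧ k₁ = k₂) ∨ (A j₁ k₂ = none ∧ A j₂ k₁ = none) :=
  (isPDA_iff.1 hA).2 _ _ _ _ _ h₁ h₂

theorem IsPDA.comp_column (hA : IsPDA F K Z A) {f : Fin K' → Fin K} (hf : f.Injective) :
    IsPDA F K' Z fun j k ↦ A j (f k) := by
  refine isPDA_iff.2 ⟨fun k ↦ hA.1 (f k), fun j₁ j₂ k₁ k₂ t h₁ h₂ ↦ ?_⟩
  simpa only [hf.eq_iff] using hA.eq_or_corners_eq_none h₁ h₂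

theorem IsPDA.map_symbol (hA : IsPDA F K Z A) {f : S → T} (hf : f.Injective) :
    IsPDA F K Z fun j k ↦ (A j k).map f := by
  refine isPDA_iff.2 ⟨fun k ↦ ?_, fun j₁ j₂ k₁ k₂ t h₁ h₂ ↦ ?_⟩
  · simpa only [Option.map_eq_none_iff] using hA.1 k
  · obtain ⟨s, hs, rfl⟩ := Option.map_eq_some_iff.1 h₁
    have hs' : A j₂ k₂ = some s := Option.map_injective hf h₂
    simpa only [Option.map_eq_none_iff] using hA.eq_or_corners_eq_none hs hs'

theorem IsPDA.append (hA : IsPDA F K Z A) {B : Fin F → Fin K' → Option S} (hB : IsPDA F K' Z B)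
    (hAB : ∀ i j k l t, A i k = some t → B j l ≠ some t) :
    IsPDA F (K + K') Z fun j ↦ Fin.append (A j) (B j) := by
  refine isPDA_iff.2 ⟨fun k ↦ ?_, fun j₁ j₂ k₁ k₂ t ↦ ?_⟩
  · cases k using Fin.addCases with
    | left k => simpa only [Fin.append_left] using hA.1 k
    | right k => simpa only [Fin.append_right] using hB.1 k
  · cases k₁ using Fin.addCases <;> cases k₂ using Fin.addCases <;>
      simp only [Fin.append_left, Fin.append_right] <;> intro h₁ h₂
    · simpa only [Fin.castAdd_inj] using hA.eq_or_corners_eq_none h₁ h₂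
    · exact absurd h₂ (hAB _ _ _ _ _ h₁)
    · exact absurd h₁ (hAB _ _ _ _ _ h₂)
    · simpa only [Fin.natAdd_inj] using hB.eq_or_corners_eq_none h₁ h₂

end Basic

/-- `HasPDA F K Z n`: an alphabet of size `n` suffices for an `(F, K, Z)` array, so that
`sPDA F K Z` is the least such `n`. -/
def HasPDA (F K Z n : ℕ) : Prop :=
  ∃ A : Fin F → Fin K → Option (Fin n), IsPDA F K Z A

namespace HasPDA

variable {F K K' Z n n' : ℕ}

theorem mono_columns (h : HasPDA F K Z n) (hK : K' ≤ K) : HasPDA F K' Z n :=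
  let ⟨_, hA⟩ := h
  ⟨_, hA.comp_column (Fin.castLE_injective hK)⟩

theorem add (h : HasPDA F K Z n) (h' : HasPDA F K' Z n') : HasPDA F (K + K') Z (n + n') := by
  obtain ⟨A, hA⟩ := h
  obtain ⟨B, hB⟩ := h'
  refine ⟨_, (hA.map_symbol (Fin.castAdd_injective n n')).append
    (hB.map_symbol (Fin.natAdd_injective n' n)) fun i j k l t hs hs' ↦ ?_⟩
  obtain ⟨a, -, rfl⟩ := Option.map_eq_some_iff.1 hs
  obtain ⟨b, -, hb⟩ := Option.map_eq_some_iff.1 hs'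
  simp only [Fin.ext_iff, Fin.val_natAdd, Fin.val_castAdd] at hb
  omega

theorem mul (h : HasPDA F K Z n) (m : ℕ) : HasPDA F (m * K) Z (m * n) := by
  induction m with
  | zero =>
    have : IsEmpty (Fin (0 * K)) := by rw [zero_mul]; infer_instance
    exact ⟨fun _ ↦ isEmptyElim, isPDA_iff.2 ⟨isEmptyElim, fun _ _ ↦ isEmptyElim⟩⟩
  | succ m ih => simpa only [add_mul, one_mul] using ih.add h

-- Entry `0` stands for an empty cell and entry `i + 1` for the symbol `i`.
theorem of_matrix (M : Matrix (Fin F) (Fin K) (Fin (n + 1))) (hcol : ∀ k, #{j | M j k = 0} = Z)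
    (hcorners : ∀ p q : Fin F × Fin K, M p.1 p.2 = M q.1 q.2 →
      M p.1 p.2 = 0 ∨ p = q ∨ (M p.1 q.2 = 0 ∧ M q.1 p.2 = 0)) :
    HasPDA F K Z n := by
  have eq_none_iff (i : Fin (n + 1)) : finSuccEquiv n i = none ↔ i = 0 := by
    rw [← finSuccEquiv_zero, EmbeddingLike.apply_eq_iff_eq]
  refine ⟨fun j k ↦ finSuccEquiv n (M j k), isPDA_iff.2 ⟨fun k ↦ ?_, fun j₁ j₂ k₁ k₂ t h₁ h₂ ↦ ?_⟩⟩
  · simpa only [eq_none_iff] using hcol k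
  · have hne : M j₁ k₁ ≠ 0 := fun h ↦ by simp [h] at h₁
    have heq : M j₁ k₁ = M j₂ k₂ := (finSuccEquiv n).injective (h₁.trans h₂.symm)
    simpa only [eq_none_iff, Prod.mk.injEq] using (hcorners (j₁, k₁) (j₂, k₂) heq).resolve_left hne

-- In the arrays below, a column with entries in rows `u` and `v` is the edge `{u, v}` of the
-- complete graph on the rows. Labelling each end of an edge by the opposite end turns the edges of
-- the complete graph on `m` rows into an array with `m` symbols: `m = 5` gives `ten_columns`,
-- `m = 4` gives `six_columns`, and `m = 3` gives the first three columns of `four_columns`.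
theorem two_columns : HasPDA 5 2 3 2 :=
  of_matrix
    !![1, 0;
       2, 0;
       0, 1;
       0, 2;
       0, 0]
    (by decide) (by decide)

theorem four_columns : HasPDA 5 4 3 3 :=
  of_matrix
    !![2, 3, 0, 0;
       1, 0, 3, 0;
       0, 1, 2, 0;
       0, 0, 0, 1;
       0, 0, 0, 2]
    (by decide) (by decide)

theorem six_columns : HasPDA 5 6 3 4 :=
  of_matrix
    !![2, 3, 4, 0, 0, 0;
       1, 0, 0, 3, 4, 0;
       0, 1, 0, 2, 0, 4;
       0, 0, 1, 0, 2, 3;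
       0, 0, 0, 0, 0, 0]
    (by decide) (by decide)

theorem ten_columns : HasPDA 5 10 3 5 :=
  of_matrix
    !![2, 3, 4, 5, 0, 0, 0, 0, 0, 0;
       1, 0, 0, 0, 3, 4, 5, 0, 0, 0;
       0, 1, 0, 0, 2, 0, 0, 4, 5, 0;
       0, 0, 1, 0, 0, 2, 0, 3, 0, 5;
       0, 0, 0, 1, 0, 0, 2, 0, 3, 4]
    (by decide) (by decide)

theorem succ_div_two_of_mod_ten (hK : K % 10 = 0 ∨ K % 10 = 9) : HasPDA 5 K 3 ((K + 1) / 2) := by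
  have h := (ten_columns.mul ((K + 1) / 10)).mono_columns (K' := K) (by omega)
  rwa [show (K + 1) / 10 * 5 = (K + 1) / 2 by omega] at h

theorem succ_div_two_add_one (hK : ¬(K % 10 = 0 ∨ K % 10 = 9)) :
    HasPDA 5 K 3 ((K + 1) / 2 + 1) := by
  have extend {r s : ℕ} (h : HasPDA 5 r 3 s) (hr : K ≤ K / 10 * 10 + r)
      (hs : K / 10 * 5 + s = (K + 1) / 2 + 1) : HasPDA 5 K 3 ((K + 1) / 2 + 1) :=
    hs ▸ ((ten_columns.mul (K / 10)).add h).mono_columns hr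
  obtain h | h | h | h : K % 10 ≤ 2 ∨ (2 < K % 10 ∧ K % 10 ≤ 4) ∨ (4 < K % 10 ∧ K % 10 ≤ 6) ∨
      6 < K % 10 := by omega
  · exact extend two_columns (by omega) (by omega)
  · exact extend four_columns (by omega) (by omega)
  · exact extend six_columns (by omega) (by omega)
  · exact extend ten_columns (by omega) (by omega)

end HasPDA

section Occurrences

variable {S : Type} {F K : ℕ}

/-- The cells of the array `A` that contain the symbol `t`. -/
noncomputable def occurrences (A : Fin F → Fin K → Option S) (t : S) : Finset (Fin F × Fin K) :=
  {p | A p.1 p.2 = some t}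

/-- The rows of the array `A` that contain the symbol `t`. -/
noncomputable def occurrenceRows (A : Fin F → Fin K → Option S) (t : S) : Finset (Fin F) :=
  (occurrences A t).image Prod.fst

variable {A : Fin F → Fin K → Option S}

theorem mem_occurrences {t : S} {p : Fin F × Fin K} : p ∈ occurrences A t ↔ A p.1 p.2 = some t := by
  simp [occurrences]

theorem mem_occurrenceRows {t : S} {j : Fin F} :
    j ∈ occurrenceRows A t ↔ ∃ k, A j k = some t := by
  simp [occurrenceRows, mem_occurrences]

end Occurrences

namespace IsPDA

variable {S : Type} {F K Z : ℕ} {A : Fin F → Fin K → Option S}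

theorem card_occurrenceRows (hA : IsPDA F K Z A) (t : S) :
    #(occurrenceRows A t) = #(occurrences A t) := by
  refine card_image_of_injOn ?_
  rintro ⟨j, k₁⟩ h₁ ⟨_, k₂⟩ h₂ rfl
  rw [mem_coe, mem_occurrences] at h₁ h₂
  exact congrArg (j, ·) (hA.2.1 _ _ _ _ h₁ h₂)

theorem erase_occurrenceRows_subset (hA : IsPDA F K Z A) {j : Fin F} {k : Fin K} {t : S}
    (h : A j k = some t) :
    (occurrenceRows A t).erase j ⊆ ({i | A i k = none} : Finset (Fin F)) := by
  intro i hi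
  obtain ⟨hij, hi⟩ := mem_erase.1 hi
  obtain ⟨l, hl⟩ := mem_occurrenceRows.1 hi
  obtain ⟨rfl, -⟩ | ⟨hik, -⟩ := hA.eq_or_corners_eq_none hl h
  · exact absurd rfl hij
  · simpa using hik

theorem card_occurrences_le_s17 (hA : IsPDA F K Z A) (t : S) : #(occurrences A t) ≤ Z + 1 := by
  obtain hempty | ⟨⟨j, k⟩, hjk⟩ := (occurrences A t).eq_empty_or_nonempty
  · simp [hempty]
  · rw [← hA.card_occurrenceRows, ← hA.1 k]
    exact Nat.sub_le_iff_le_add.1 <| pred_card_le_card_erase.trans <|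
      card_le_card (hA.erase_occurrenceRows_subset (mem_occurrences.1 hjk))

theorem ne_none_of_card_occurrences_eq (hA : IsPDA F K Z A) {a j : Fin F} {k : Fin K} {t : S}
    (hcard : #(occurrences A t) = Z + 1) (h : A j k = some t) (ha : a ∉ occurrenceRows A t) :
    A a k ≠ none := by
  have hj : j ∈ occurrenceRows A t := mem_occurrenceRows.2 ⟨k, h⟩
  have heq : (occurrenceRows A t).erase j = ({i | A i k = none} : Finset (Fin F)) := by
    refine eq_of_subset_of_card_le (hA.erase_occurrenceRows_subset h) ?_
    rw [card_erase_of_mem hj, hA.card_occurrenceRows, hcard, hA.1 k, Nat.add_sub_cancel]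
  intro hak
  have hmem : a ∈ (occurrenceRows A t).erase j := by simpa [heq] using hak
  exact ha (mem_of_mem_erase hmem)

theorem card_column_ne_none_add (hA : IsPDA F K Z A) (k : Fin K) :
    #{j | A j k ≠ none} + Z = F := by
  rw [← hA.1 k, add_comm, card_filter_add_card_filter_not, card_univ, Fintype.card_fin]

theorem filter_occurrences_of_eq_some (hA : IsPDA F K Z A) {a : Fin F} {k : Fin K} {t : S}
    (h : A a k = some t) : {p ∈ occurrences A t | A a p.2 ≠ none} = {(a, k)} := by
  ext ⟨j, l⟩
  simp only [mem_filter, mem_occurrences, mem_singleton, Prod.mk.injEq]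
  constructor
  · rintro ⟨hjl, hal⟩
    exact (hA.eq_or_corners_eq_none hjl h).resolve_right fun hnone ↦ hal hnone.2
  · rintro ⟨rfl, rfl⟩
    simp [h]

theorem card_filter_occurrences (hA : IsPDA F K Z A) {a : Fin F} {t : S}
    (hat : a ∉ occurrenceRows A t → #(occurrences A t) = Z + 1) :
    #{p ∈ occurrences A t | A a p.2 ≠ none} = if a ∈ occurrenceRows A t then 1 else Z + 1 := by
  split_ifs with h
  · obtain ⟨k, hk⟩ := mem_occurrenceRows.1 h
    rw [hA.filter_occurrences_of_eq_some hk, card_singleton]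
  · rw [← hat h, filter_true_of_mem]
    exact fun p hp ↦ hA.ne_none_of_card_occurrences_eq (hat h) (mem_occurrences.1 hp) h

theorem card_compl_occurrenceRows_le (hA : IsPDA F K Z A) (hZ : Z < F) {t : S}
    (ht : #(occurrences A t) ≠ Z + 1) :
    #(occurrenceRows A t)ᶜ ≤ (Z + 1 - #(occurrences A t)) * (F - Z) := by
  have hle := hA.card_occurrences_le_s17 t
  rw [card_compl, Fintype.card_fin, hA.card_occurrenceRows]
  obtain ⟨d, rfl⟩ := Nat.exists_eq_add_of_lt hZ
  obtain ⟨e, he⟩ := Nat.exists_eq_add_of_le (show #(occurrences A t) ≤ Z by omega)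
  rw [show Z + 1 - #(occurrences A t) = e + 1 by omega, show Z + d + 1 - Z = d + 1 by omega,
    show Z + d + 1 - #(occurrences A t) = e + d + 1 by omega]
  nlinarith

variable [Fintype S]

theorem sum_card_occurrences_filter_add (hA : IsPDA F K Z A) (P : Fin K → Prop) [DecidablePred P] :
    ∑ t, #{p ∈ occurrences A t | P p.2} + #{k | P k} * Z = #{k | P k} * F := by
  have hcell (j : Fin F) (k : Fin K) :
      ∑ t, (if A j k = some t then 1 else 0) = if A j k ≠ none then 1 else 0 := by
    cases A j k <;> simp
  have hcount : ∑ t, #{p ∈ occurrences A t | P p.2} = ∑ k with P k, #{j | A j k ≠ none} :=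
    calc ∑ t, #{p ∈ occurrences A t | P p.2}
      _ = ∑ t, ∑ k with P k, ∑ j, if A j k = some t then 1 else 0 := by
        refine sum_congr rfl fun t _ ↦ ?_
        simp only [occurrences, filter_filter, card_filter, Fintype.sum_prod_type_right, sum_filter]
        exact sum_congr rfl fun k _ ↦ by by_cases h : P k <;> simp [h]
      _ = ∑ k with P k, ∑ j, ∑ t, if A j k = some t then 1 else 0 := by
        rw [sum_comm]
        exact sum_congr rfl fun k _ ↦ sum_comm
      _ = ∑ k with P k, #{j | A j k ≠ none} := by simp only [hcell, card_filter]
  rw [hcount, ← smul_eq_mul, ← sum_const, ← sum_add_distrib]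
  simp only [hA.card_column_ne_none_add, sum_const, smul_eq_mul]

theorem sum_card_occurrences (hA : IsPDA F K Z A) : ∑ t, #(occurrences A t) = K * (F - Z) := by
  have h := hA.sum_card_occurrences_filter_add fun _ ↦ True
  simp only [filter_true, card_univ, Fintype.card_fin] at h
  rw [Nat.mul_sub]
  exact Nat.eq_sub_of_add_eq h

theorem mul_sub_le_card_mul (hA : IsPDA F K Z A) : K * (F - Z) ≤ Fintype.card S * (Z + 1) := by
  rw [← hA.sum_card_occurrences]
  exact sum_le_card_nsmul _ _ _ fun t _ ↦ hA.card_occurrences_le_s17 t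

theorem card_row_ne_none (hA : IsPDA F K Z A) (a : Fin F) :
    #{k | A a k ≠ none} = #{t | a ∈ occurrenceRows A t} := by
  have hinj : Set.InjOn (A a) ({k | A a k ≠ none} : Finset (Fin K)) := by
    intro k hk l _ hkl
    obtain ⟨t, ht⟩ := Option.ne_none_iff_exists'.1 (by simpa using hk)
    exact hA.2.1 a k l t ht (hkl ▸ ht)
  rw [← card_image_of_injOn hinj, ← card_map Function.Embedding.some (s := {t | _})]
  refine congrArg card ?_
  ext (_ | t)
  · simp
  · simp only [mem_image, mem_map, mem_filter_univ, mem_occurrenceRows,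
      Function.Embedding.some_apply, Option.some.injEq, exists_eq_right]
    exact ⟨fun ⟨k, _, hk⟩ ↦ ⟨k, hk⟩, fun ⟨k, hk⟩ ↦ ⟨k, by simp [hk], hk⟩⟩

theorem card_symbols_in_row_mul (hA : IsPDA F K Z A) {a : Fin F}
    (ha : ∀ t, a ∉ occurrenceRows A t → #(occurrences A t) = Z + 1) :
    #{t | a ∈ occurrenceRows A t} * F = Fintype.card S * (Z + 1) := by
  have hsplit : #{t | a ∈ occurrenceRows A t} + #{t | a ∉ occurrenceRows A t} = Fintype.card S :=
    card_filter_add_card_filter_not _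
  have hcount := hA.sum_card_occurrences_filter_add fun k ↦ A a k ≠ none
  simp only [hA.card_filter_occurrences (ha _), sum_ite, sum_const, smul_eq_mul,
    hA.card_row_ne_none] at hcount
  rw [← hcount, ← hsplit]
  ring

theorem sum_sub_card_occurrences (hA : IsPDA F K Z A) :
    ∑ t, (Z + 1 - #(occurrences A t)) = Fintype.card S * (Z + 1) - K * (F - Z) := by
  rw [sum_tsub_distrib _ fun t _ ↦ hA.card_occurrences_le_s17 t, hA.sum_card_occurrences, sum_const,
    card_univ, smul_eq_mul]

-- A symbol with defect `e ≥ 1` rules out `F - (Z + 1 - e)` rows, which is at most `e * (F - Z)`.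
theorem exists_row_forall_notMem_card_eq (hA : IsPDA F K Z A) (hZ : Z < F)
    (hdefect : (Fintype.card S * (Z + 1) - K * (F - Z)) * (F - Z) < F) :
    ∃ a, ∀ t, a ∉ occurrenceRows A t → #(occurrences A t) = Z + 1 := by
  by_contra! hbad
  have hcover : univ ⊆ ({t | #(occurrences A t) ≠ Z + 1} : Finset S).biUnion
      fun t ↦ (occurrenceRows A t)ᶜ := by
    intro a _
    obtain ⟨t, hat, ht⟩ := hbad a
    exact mem_biUnion.2 ⟨t, by simpa using ht, mem_compl.2 hat⟩
  refine hdefect.not_ge ?_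
  calc F = #(univ : Finset (Fin F)) := (card_fin F).symm
    _ ≤ ∑ t with #(occurrences A t) ≠ Z + 1, #(occurrenceRows A t)ᶜ :=
      (card_le_card hcover).trans card_biUnion_le
    _ ≤ ∑ t with #(occurrences A t) ≠ Z + 1, (Z + 1 - #(occurrences A t)) * (F - Z) :=
      sum_le_sum fun t ht ↦ hA.card_compl_occurrenceRows_le hZ (mem_filter.1 ht).2
    _ ≤ ∑ t, (Z + 1 - #(occurrences A t)) * (F - Z) := sum_le_univ_sum_of_nonneg fun _ ↦ zero_le
    _ = (Fintype.card S * (Z + 1) - K * (F - Z)) * (F - Z) := by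
      rw [← sum_mul, hA.sum_sub_card_occurrences]

theorem dvd_card_mul_of_defect_lt (hA : IsPDA F K Z A) (hZ : Z < F)
    (hdefect : (Fintype.card S * (Z + 1) - K * (F - Z)) * (F - Z) < F) :
    F ∣ Fintype.card S * (Z + 1) :=
  let ⟨_, ha⟩ := hA.exists_row_forall_notMem_card_eq hZ hdefect
  Dvd.intro_left _ (hA.card_symbols_in_row_mul ha)

end IsPDA

theorem natCeil_div_two (K : ℕ) : ⌈(K : ℚ) / 2⌉₊ = (K + 1) / 2 := by
  refine eq_of_forall_ge_iff fun m ↦ ?_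
  rw [Nat.ceil_le, div_le_iff₀ two_pos]
  norm_cast
  omega

theorem stmt_17 (K : ℕ) (hK : 0 < K) :
    sPDA 5 K 3 =
      if K % 10 = 0 ∨ K % 10 = 9
        then ⌈(K : ℚ) / 2⌉₊
        else ⌈(K : ℚ) / 2⌉₊ + 1 := by
  rw [natCeil_div_two]
  refine IsLeast.csInf_eq ⟨?_, ?_⟩
  · split_ifs with h
    · exact HasPDA.succ_div_two_of_mod_ten h
    · exact HasPDA.succ_div_two_add_one h
  · rintro n ⟨A, hA⟩
    have hle : K * 2 ≤ n * 4 := by simpa using hA.mul_sub_le_card_mul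
    have hdvd (h : (n * 4 - K * 2) * 2 < 5) : 5 ∣ n * 4 := by
      simpa using hA.dvd_card_mul_of_defect_lt (by norm_num) (by simpa using h)
    split_ifs <;> omega
end
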